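/- Let V be a set equipped with three linear orders <₁, <₂, <₃. Then every 5-element subset S of V contains vertices a, b, b', c (not necessarily with b ≠ b') such that the 4-tuple (a, b, b', c) is forcing. -/

import Mathlib

/-- Given three strict orders `r₁, r₂, r₃`, the 4-tuple `(a, b, b', c)` is forcing if
`a <₁ b <₁ c`, `a <₁ b' <₁ c`, `(a,b,c)` is not a 2-hole (i.e. not both `b <₂ a` and
`b <₂ c`), and `(a,b',c)` is not a 3-hole (i.e. not both `b' <₃ a` and `b' <₃ c`). -/
def Forcing {V : Type*} (r₁ r₂ r₃ : V → V → Prop) (a b b' c : V) : Prop :=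
  r₁ a b ∧ r₁ b c ∧ r₁ a b' ∧ r₁ b' c ∧
    ¬ (r₂ b a ∧ r₂ b c) ∧ ¬ (r₃ b' a ∧ r₃ b' c)

/-!
Suppose there is no forcing 4-tuple. Then for any `a` and `c`, either all vertices between them
give 2-holes or all of them give 3-holes; colour the pair `(a, c)` with 2 or 3 accordingly. If
`a <₁ b <₁ c <₁ d`, the crossing pairs `(a, c)` and `(b, d)` cannot have the same colour `i`, as
this would give both `b <_i c` and `c <_i b`. Now place five vertices in `<₁`-order around a
pentagon. Its five diagonals cross each other in a 5-cycle, which has no proper 2-colouring.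
-/

/-- The pair `(a, c)` is hollow for `r` if every vertex between `a` and `c` in the order `r₁` is
below both of them in `r`. For `r = <_i`, this says that each such `b` makes `(a, b, c)` an
`i`-hole. -/
def IsHollow {V : Type*} (r₁ r : V → V → Prop) (a c : V) : Prop :=
  ∀ b, r₁ a b → r₁ b c → r b a ∧ r b c

section Hollow

variable {V : Type*} {r₁ r₂ r₃ : V → V → Prop} {a b c d : V}

theorem isHollow_or_isHollow_of_not_forcing (h : ∀ b b', ¬ Forcing r₁ r₂ r₃ a b b' c) :
    IsHollow r₁ r₂ a c ∨ IsHollow r₁ r₃ a c := by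
  by_contra! hcon
  simp only [IsHollow, not_forall] at hcon
  obtain ⟨⟨b, hab, hbc, hb⟩, ⟨b', hab', hbc', hb'⟩⟩ := hcon
  exact h b b' ⟨hab, hbc, hab', hbc', hb, hb'⟩

theorem IsHollow.not_isHollow_of_crossing {r : V → V → Prop} [Std.Asymm r]
    (hac : IsHollow r₁ r a c) (hab : r₁ a b) (hbc : r₁ b c) (hcd : r₁ c d) :
    ¬ IsHollow r₁ r b d := fun hbd =>
  asymm_of r (hac b hab hbc).2 (hbd c hbc hcd).1

theorem isHollow_iff_not_isHollow_of_crossing [Std.Asymm r₂] [Std.Asymm r₃]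
    (h : ∀ a b b' c, ¬ Forcing r₁ r₂ r₃ a b b' c)
    (hab : r₁ a b) (hbc : r₁ b c) (hcd : r₁ c d) :
    IsHollow r₁ r₂ a c ↔ ¬ IsHollow r₁ r₂ b d := by
  refine ⟨fun hac => hac.not_isHollow_of_crossing hab hbc hcd, fun hbd₂ => ?_⟩
  have hbd₃ : IsHollow r₁ r₃ b d :=
    (isHollow_or_isHollow_of_not_forcing fun x y => h b x y d).resolve_left hbd₂
  exact (isHollow_or_isHollow_of_not_forcing fun x y => h a x y c).resolve_right
    fun hac₃ => hac₃.not_isHollow_of_crossing hab hbc hcd hbd₃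

end Hollow

theorem exists_forcing_fin_five (r₂ r₃ : Fin 5 → Fin 5 → Prop) [Std.Asymm r₂] [Std.Asymm r₃] :
    ∃ a b b' c, Forcing (· < ·) r₂ r₃ a b b' c := by
  by_contra! hcon
  have crossing (a b c d : Fin 5) (h : a < b ∧ b < c ∧ c < d) :
      IsHollow (· < ·) r₂ a c ↔ ¬ IsHollow (· < ·) r₂ b d :=
    isHollow_iff_not_isHollow_of_crossing hcon h.1 h.2.1 h.2.2
  have odd_cycle : IsHollow (· < ·) r₂ 0 2 ↔ ¬ IsHollow (· < ·) r₂ 0 2 := calc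
    _ ↔ ¬ IsHollow (· < ·) r₂ 1 3 := crossing 0 1 2 3 (by decide)
    _ ↔ IsHollow (· < ·) r₂ 2 4 := (crossing 1 2 3 4 (by decide)).not_left
    _ ↔ ¬ IsHollow (· < ·) r₂ 0 3 := iff_not_comm.mp (crossing 0 2 3 4 (by decide))
    _ ↔ IsHollow (· < ·) r₂ 1 4 := (crossing 0 1 3 4 (by decide)).not_left
    _ ↔ ¬ IsHollow (· < ·) r₂ 0 2 := iff_not_comm.mp (crossing 0 1 2 4 (by decide))
  exact iff_not_self odd_cycle

theorem Forcing.map {U V : Type*} {s₁ : U → U → Prop} {r₁ r₂ r₃ : V → V → Prop} (f : s₁ →r r₁)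
    {a b b' c : U} (h : Forcing s₁ (f ⁻¹'o r₂) (f ⁻¹'o r₃) a b b' c) :
    Forcing r₁ r₂ r₃ (f a) (f b) (f b') (f c) :=
  let ⟨hab, hbc, hab', hbc', h₂, h₃⟩ := h
  ⟨f.map_rel hab, f.map_rel hbc, f.map_rel hab', f.map_rel hbc', h₂, h₃⟩

theorem exists_relHom_fin_of_le_card {V : Type*} (r : V → V → Prop) [IsStrictTotalOrder V r]
    {S : Finset V} {n : ℕ} (hS : n ≤ S.card) :
    ∃ f : ((· < ·) : Fin n → Fin n → Prop) →r r, ∀ i, f i ∈ S := by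
  classical
  let _ := linearOrderOfSTO r
  exact ⟨⟨S.orderEmbOfCardLe hS, fun hij => (S.orderEmbOfCardLe hS).strictMono hij⟩,
    S.orderEmbOfCardLe_mem hS⟩

theorem five_points_contain_forcing_general {V : Type*} (r₁ r₂ r₃ : V → V → Prop)
    [IsStrictTotalOrder V r₁] [Std.Asymm r₂] [Std.Asymm r₃] (S : Finset V) (hS : 5 ≤ S.card) :
    ∃ a ∈ S, ∃ b ∈ S, ∃ b' ∈ S, ∃ c ∈ S, Forcing r₁ r₂ r₃ a b b' c := by
  obtain ⟨f, hf⟩ := exists_relHom_fin_of_le_card r₁ hS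
  have : Std.Asymm (f ⁻¹'o r₂) := RelHomClass.asymm (RelHom.preimage f r₂)
  have : Std.Asymm (f ⁻¹'o r₃) := RelHomClass.asymm (RelHom.preimage f r₃)
  obtain ⟨a, b, b', c, h⟩ := exists_forcing_fin_five (f ⁻¹'o r₂) (f ⁻¹'o r₃)
  exact ⟨f a, hf a, f b, hf b, f b', hf b', f c, hf c, h.map f⟩

/-- Let `V` carry three strict total orders `r₁, r₂, r₃`. Then every 5-element subset of
`V` contains vertices `a, b, b', c` (with `b = b'` allowed) such that `(a, b, b', c)` is a
forcing 4-tuple. -/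
theorem five_points_contain_forcing {V : Type*} [DecidableEq V]
    (r₁ r₂ r₃ : V → V → Prop)
    (h₁ : IsStrictTotalOrder V r₁) (h₂ : IsStrictTotalOrder V r₂)
    (h₃ : IsStrictTotalOrder V r₃)
    (S : Finset V) (hS : S.card = 5) :
    ∃ a ∈ S, ∃ b ∈ S, ∃ b' ∈ S, ∃ c ∈ S, Forcing r₁ r₂ r₃ a b b' c :=
  five_points_contain_forcing_general r₁ r₂ r₃ S hS.ge
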